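/- arXiv:1809.09236 — 2 statements merged into one kernel-verified Lean document; each statement's English description precedes it below -/
import Mathlib

section
/- Let ω_1, ω_2 > 0 and Ω ≥ 0, and set c = (Ω² − ω_1²)(Ω² − ω_2²). Then c ≤ 0 if and only if min{ω_1, ω_2} ≤ Ω ≤ max{ω_1, ω_2}; moreover the matrix M_2 = [[0, Ω, 1, 0], [−Ω, 0, 0, 1], [−ω_1², 0, 0, Ω], [0, −ω_2², −Ω, 0]] has a real eigenvalue if and only if min{ω_1, ω_2} ≤ Ω ≤ max{ω_1, ω_2}. -/
/-!
A real `lam` is an eigenvalue of `M2mat` iff `det (M2mat - lam • 1) = 0`, that is, iff `lam` is a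
root of `lam ^ 4 + (2Ω² + ω₁² + ω₂²) lam ^ 2 + c` (`M2mat_eigen_iff`). Since the middle coefficient
is nonnegative, such a real root exists iff `c ≤ 0` (`exists_biquadratic_root_iff`). The sign of `c`
is read off from its two factors, squaring being monotone on nonnegative reals
(`const_nonpos_iff`).
-/

open Polynomial Filter

noncomputable section

/-- The coefficient matrix of the mean-value system in dimension 2. -/
def M2mat (ω1 ω2 Ω : ℝ) : Matrix (Fin 4) (Fin 4) ℝ :=
  !![0, Ω, 1, 0; -Ω, 0, 0, 1; -ω1^2, 0, 0, Ω; 0, -ω2^2, -Ω, 0]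

/-- The coefficient matrix of the mean-value system in dimension 3,
for rotation axis `Ω = (0,0,Ω)`. -/
def M3mat (ω1 ω2 ω3 Ω : ℝ) : Matrix (Fin 6) (Fin 6) ℝ :=
  !![0, Ω, 0, 1, 0, 0;
     -Ω, 0, 0, 0, 1, 0;
     0, 0, 0, 0, 0, 1;
     -ω1^2, 0, 0, 0, Ω, 0;
     0, -ω2^2, 0, -Ω, 0, 0;
     0, 0, -ω3^2, 0, 0, 0]

/-- The characteristic polynomial of `M2mat`, as a determinant. -/
lemma M2mat_sub_det (ω1 ω2 Ω lam : ℝ) :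
    (M2mat ω1 ω2 Ω - lam • (1 : Matrix (Fin 4) (Fin 4) ℝ)).det =
      lam ^ 4 + (2 * Ω ^ 2 + ω1 ^ 2 + ω2 ^ 2) * lam ^ 2
        + (Ω ^ 2 - ω1 ^ 2) * (Ω ^ 2 - ω2 ^ 2) := by
  simp [M2mat, Matrix.det_succ_row_zero, Fin.sum_univ_succ, Fin.succAbove, Matrix.one_apply]
  ring

lemma M2mat_eigen_iff (ω1 ω2 Ω lam : ℝ) :
    (∃ v : Fin 4 → ℝ, v ≠ 0 ∧ (M2mat ω1 ω2 Ω).mulVec v = lam • v) ↔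
      lam ^ 4 + (2 * Ω ^ 2 + ω1 ^ 2 + ω2 ^ 2) * lam ^ 2
        + (Ω ^ 2 - ω1 ^ 2) * (Ω ^ 2 - ω2 ^ 2) = 0 := by
  rw [← M2mat_sub_det, ← Matrix.exists_mulVec_eq_zero_iff]
  simp only [Matrix.sub_mulVec, Matrix.smul_mulVec, Matrix.one_mulVec, sub_eq_zero]

/-- A biquadratic with nonnegative middle coefficient has a real root iff its constant term is
nonpositive. -/
lemma exists_biquadratic_root_iff (b c : ℝ) (hb : 0 ≤ b) :
    (∃ x : ℝ, x ^ 4 + b * x ^ 2 + c = 0) ↔ c ≤ 0 := by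
  constructor
  · rintro ⟨x, hx⟩
    have : 0 ≤ x ^ 4 + b * x ^ 2 := by positivity
    linarith
  · intro hc
    have hd : 0 ≤ b ^ 2 - 4 * c := by nlinarith [sq_nonneg b]
    have hs : b ≤ √(b ^ 2 - 4 * c) := Real.le_sqrt_of_sq_le (by linarith)
    have hsq := Real.sq_sqrt hd
    -- `x ^ 2` is the larger root of `t ^ 2 + b * t + c`.
    refine ⟨√((√(b ^ 2 - 4 * c) - b) / 2), ?_⟩
    have hx : √((√(b ^ 2 - 4 * c) - b) / 2) ^ 2 = (√(b ^ 2 - 4 * c) - b) / 2 :=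
      Real.sq_sqrt (by linarith)
    rw [show ∀ x : ℝ, x ^ 4 = (x ^ 2) ^ 2 from fun x => by ring, hx]
    linarith

lemma const_nonpos_iff (ω1 ω2 Ω : ℝ) (h1 : 0 < ω1) (h2 : 0 < ω2) (hΩ : 0 ≤ Ω) :
    (Ω ^ 2 - ω1 ^ 2) * (Ω ^ 2 - ω2 ^ 2) ≤ 0 ↔ min ω1 ω2 ≤ Ω ∧ Ω ≤ max ω1 ω2 := by
  rw [mul_nonpos_iff]
  simp only [sub_nonneg, sub_nonpos, pow_le_pow_iff_left₀ h1.le hΩ two_ne_zero,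
    pow_le_pow_iff_left₀ h2.le hΩ two_ne_zero, pow_le_pow_iff_left₀ hΩ h1.le two_ne_zero,
    pow_le_pow_iff_left₀ hΩ h2.le two_ne_zero, min_le_iff, le_max_iff]
  grind

/-- `c ≤ 0` iff `min{ω₁,ω₂} ≤ Ω ≤ max{ω₁,ω₂}`, and `M₂` has a real
eigenvalue iff `min{ω₁,ω₂} ≤ Ω ≤ max{ω₁,ω₂}`. -/
theorem statement12 (ω1 ω2 Ω : ℝ) (h1 : 0 < ω1) (h2 : 0 < ω2) (hΩ : 0 ≤ Ω)
    (c : ℝ) (hc : c = (Ω ^ 2 - ω1 ^ 2) * (Ω ^ 2 - ω2 ^ 2)) :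
    (c ≤ 0 ↔ min ω1 ω2 ≤ Ω ∧ Ω ≤ max ω1 ω2) ∧
    ((∃ (lam : ℝ) (v : Fin 4 → ℝ), v ≠ 0 ∧ (M2mat ω1 ω2 Ω).mulVec v = lam • v) ↔
      min ω1 ω2 ≤ Ω ∧ Ω ≤ max ω1 ω2) := by
  subst hc
  have hb : 0 ≤ 2 * Ω ^ 2 + ω1 ^ 2 + ω2 ^ 2 := by positivity
  refine ⟨const_nonpos_iff ω1 ω2 Ω h1 h2 hΩ, ?_⟩
  simp only [M2mat_eigen_iff]
  rw [exists_biquadratic_root_iff _ _ hb, const_nonpos_iff ω1 ω2 Ω h1 h2 hΩ]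

end
end

section
/- Let ω_1, ω_2 > 0 with ω_1 ≠ ω_2 and let Ω satisfy min{ω_1, ω_2} < Ω < max{ω_1, ω_2}. Set b = 2Ω² + ω_1² + ω_2², c = (Ω² − ω_1²)(Ω² − ω_2²) and D = b² − 4c. Then c < 0, the number λ_+ = √((−b + √D)/2) is a real positive simple eigenvalue of the matrix M_2 = [[0, Ω, 1, 0], [−Ω, 0, 0, 1], [−ω_1², 0, 0, Ω], [0, −ω_2², −Ω, 0]], and −λ_+ is also a simple eigenvalue of M_2. -/
/-!
The characteristic polynomial of `M₂` is `p = X⁴ + b X² + c`. Since `Ω` lies strictly between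
`ω₁` and `ω₂`, the two factors of `c` have opposite signs, so `c < 0` and `√D > b`; hence
`λ₊² = (-b + √D) / 2` is a positive root of `y² + b y + c`, and `p (±λ₊) = 0`. Simplicity holds
because `p'(s) = 2 s (2 s² + b)` does not vanish at any real `s ≠ 0` when `b > 0`.
-/

open Polynomial Filter

noncomputable section

lemma M2mat_charpoly (ω1 ω2 Ω : ℝ) :
    (M2mat ω1 ω2 Ω).charpoly = X ^ 4 + C (2 * Ω ^ 2 + ω1 ^ 2 + ω2 ^ 2) * X ^ 2
      + C ((Ω ^ 2 - ω1 ^ 2) * (Ω ^ 2 - ω2 ^ 2)) := by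
  have h : (M2mat ω1 ω2 Ω).charmatrix =
      !![X, -C Ω, -1, 0; C Ω, X, 0, -1; C ω1 ^ 2, 0, X, -C Ω; 0, C ω2 ^ 2, C Ω, X] := by
    ext1 i j
    fin_cases i <;> fin_cases j <;> simp [M2mat]
  have h2 : (C 2 : ℝ[X]) = 2 := rfl
  rw [Matrix.charpoly, h, Matrix.det_succ_row_zero]
  simp [Fin.sum_univ_succ, Matrix.det_fin_three, Fin.succAbove, h2]
  ring

lemma exists_eigenvector_of_charpoly_isRoot (M : Matrix (Fin 4) (Fin 4) ℝ) (s : ℝ)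
    (hs : M.charpoly.IsRoot s) : ∃ v : Fin 4 → ℝ, v ≠ 0 ∧ M.mulVec v = s • v := by
  rw [IsRoot, Matrix.eval_charpoly] at hs
  obtain ⟨v, hv, h⟩ := Matrix.exists_mulVec_eq_zero_iff.mpr hs
  refine ⟨v, hv, ?_⟩
  rw [Matrix.sub_mulVec, sub_eq_zero] at h
  rw [← h]
  ext i
  simp [Matrix.scalar_apply, Matrix.mulVec_diagonal]

/-- A nonzero real root of an even quartic with positive quadratic coefficient is simple. -/
lemma biquadratic_rootMultiplicity (b c s : ℝ) (hb : 0 < b) (hs : s ≠ 0)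
    (h : s ^ 4 + b * s ^ 2 + c = 0) :
    (X ^ 4 + C b * X ^ 2 + C c : ℝ[X]).rootMultiplicity s = 1 := by
  have hp : (X ^ 4 + C b * X ^ 2 + C c : ℝ[X]) ≠ 0 := by
    intro h0
    have := congrArg (fun q : ℝ[X] => q.coeff 4) h0
    simp at this
  refine le_antisymm (not_lt.mp ?_) ((rootMultiplicity_pos hp).mpr (by simpa [IsRoot] using h))
  rw [one_lt_rootMultiplicity_iff_isRoot hp]
  rintro ⟨-, hd⟩
  simp [IsRoot] at hd
  have : s * (2 * s ^ 2 + b) = 0 := by linarith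
  rcases mul_eq_zero.mp this with h' | h'
  · exact hs h'
  · nlinarith [sq_nonneg s]

/-- if `min{ω₁,ω₂} < Ω < max{ω₁,ω₂}` (with `ω₁ ≠ ω₂`), then `c < 0`,
`λ₊ = √((-b + √D)/2)` is a real positive eigenvalue of `M₂` of algebraic multiplicity 1
(i.e. simple), and `-λ₊` is also a simple eigenvalue. -/
theorem statement13 (ω1 ω2 Ω : ℝ) (h1 : 0 < ω1) (h2 : 0 < ω2) (hne : ω1 ≠ ω2)
    (hlo : min ω1 ω2 < Ω) (hhi : Ω < max ω1 ω2)
    (b c D lamp : ℝ)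
    (hb : b = 2 * Ω ^ 2 + ω1 ^ 2 + ω2 ^ 2)
    (hc : c = (Ω ^ 2 - ω1 ^ 2) * (Ω ^ 2 - ω2 ^ 2))
    (hD : D = b ^ 2 - 4 * c)
    (hlamp : lamp = Real.sqrt ((-b + Real.sqrt D) / 2)) :
    c < 0 ∧ 0 < lamp ∧
      (∃ v : Fin 4 → ℝ, v ≠ 0 ∧ (M2mat ω1 ω2 Ω).mulVec v = lamp • v) ∧
      (M2mat ω1 ω2 Ω).charpoly.rootMultiplicity lamp = 1 ∧
      (∃ v : Fin 4 → ℝ, v ≠ 0 ∧ (M2mat ω1 ω2 Ω).mulVec v = (-lamp) • v) ∧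
      (M2mat ω1 ω2 Ω).charpoly.rootMultiplicity (-lamp) = 1 := by
  have hc0 : c < 0 := by
    rw [hc]
    rcases lt_or_gt_of_ne hne with h | h
    · rw [min_eq_left h.le] at hlo
      rw [max_eq_right h.le] at hhi
      exact mul_neg_of_pos_of_neg (by nlinarith) (by nlinarith)
    · rw [min_eq_right h.le] at hlo
      rw [max_eq_left h.le] at hhi
      exact mul_neg_of_neg_of_pos (by nlinarith) (by nlinarith)
  have hb0 : 0 < b := by rw [hb]; positivity
  have hsD : b < Real.sqrt D := Real.lt_sqrt_of_sq_lt (by linarith)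
  have hsq : Real.sqrt D ^ 2 = D := Real.sq_sqrt (by nlinarith)
  have hl0 : 0 < lamp := by rw [hlamp]; exact Real.sqrt_pos.mpr (by linarith)
  have hl2 : lamp ^ 2 = (-b + Real.sqrt D) / 2 := by
    rw [hlamp]; exact Real.sq_sqrt (by linarith)
  have hroot : lamp ^ 4 + b * lamp ^ 2 + c = 0 := by
    have : lamp ^ 4 = (lamp ^ 2) ^ 2 := by ring
    rw [this, hl2]
    linarith
  have hroot' : (-lamp) ^ 4 + b * (-lamp) ^ 2 + c = 0 := by
    rw [← hroot]; ring
  have hp : (M2mat ω1 ω2 Ω).charpoly = X ^ 4 + C b * X ^ 2 + C c := by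
    rw [M2mat_charpoly, hb, hc]
  refine ⟨hc0, hl0, exists_eigenvector_of_charpoly_isRoot _ _ ?_, ?_,
    exists_eigenvector_of_charpoly_isRoot _ _ ?_, ?_⟩
  · rw [hp]; simpa [IsRoot] using hroot
  · rw [hp]; exact biquadratic_rootMultiplicity b c _ hb0 hl0.ne' hroot
  · rw [hp, IsRoot]; simpa only [eval_add, eval_mul, eval_pow, eval_X, eval_C] using hroot'
  · rw [hp]; exact biquadratic_rootMultiplicity b c _ hb0 (neg_ne_zero.mpr hl0.ne') hroot'

end
end
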